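/- arXiv:2506.11281 — 3 statements merged into one kernel-verified Lean document; each statement's English description precedes it below -/
import Mathlib

section
/- (Theorem 1) Let E be a finite-dimensional real inner product space and m ∈ ℕ. Let Q : E → E be differentiable at x ∈ E and suppose its Fréchet derivative P = DQ(x) is a symmetric idempotent, i.e., self-adjoint with P ∘ P = P (so P is the orthogonal projection onto the tangent space of the clean data manifold at Q(x)). Let H : E → EuclideanSpace ℝ (Fin m) be differentiable at Q(x), and define R_H(y) = ‖H(Q(y))‖². Then the gradient ∇R_H(x) lies in the range of P; equivalently, P(∇R_H(x)) = ∇R_H(x), so that projecting ∇R_H(x) onto the range of P leaves it unchanged. -/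
open RealInnerProductSpace

/-- (Theorem 1 of the paper) If the Fréchet derivative `P = DQ(x)` of the denoising map
`Q` is a symmetric idempotent (the orthogonal projection onto the tangent space of the
clean data manifold), then the gradient of the residual `R_H(y) = ‖H(Q y)‖²` at `x`
lies in the range of `P`: projecting it onto the range of `P` leaves it unchanged. -/
theorem residual_gradient_tangential
    {E : Type*} [NormedAddCommGroup E] [InnerProductSpace ℝ E] [FiniteDimensional ℝ E]
    (m : ℕ) (Q : E → E) (H : E → EuclideanSpace ℝ (Fin m)) (x : E)
    (hQ : DifferentiableAt ℝ Q x)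
    (hsa : ∀ u v : E, ⟪(fderiv ℝ Q x) u, v⟫ = ⟪u, (fderiv ℝ Q x) v⟫)
    (hidem : (fderiv ℝ Q x).comp (fderiv ℝ Q x) = fderiv ℝ Q x)
    (hH : DifferentiableAt ℝ H (Q x)) :
    (fderiv ℝ Q x) (gradient (fun y => ‖H (Q y)‖ ^ 2) x) =
      gradient (fun y => ‖H (Q y)‖ ^ 2) x := by
  have hg : DifferentiableAt ℝ (fun z => ‖H z‖ ^ 2) (Q x) := hH.norm_sq ℝ
  have hc : fderiv ℝ (fun y => ‖H (Q y)‖ ^ 2) x =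
      (fderiv ℝ (fun z => ‖H z‖ ^ 2) (Q x)).comp (fderiv ℝ Q x) :=
    (hg.hasFDerivAt.comp x hQ.hasFDerivAt).fderiv
  have key : ∀ v : E, ⟪gradient (fun y => ‖H (Q y)‖ ^ 2) x, v⟫ =
      fderiv ℝ (fun z => ‖H z‖ ^ 2) (Q x) (fderiv ℝ Q x v) := by
    intro v
    rw [← InnerProductSpace.toDual_apply_apply (𝕜 := ℝ), toDual_gradient, hc]
    rfl
  refine ext_inner_right ℝ fun v => ?_
  have hv : fderiv ℝ Q x (fderiv ℝ Q x v) = fderiv ℝ Q x v := DFunLike.congr_fun hidem v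
  rw [hsa, key, key, hv]
end

section
/- Let E be a finite-dimensional real inner product space, m ∈ ℕ, and let Q : E → E be differentiable at x ∈ E with Fréchet derivative P = DQ(x) a symmetric idempotent (self-adjoint, P ∘ P = P). Let G : E → EuclideanSpace ℝ (Fin m) be differentiable at Q(x), and define the inequality residual R_G(y) = Σ_{i} (max(G(Q(y))_i, 0))². Then R_G is differentiable at x and its gradient satisfies P(∇R_G(x)) = ∇R_G(x), i.e., ∇R_G(x) lies in the range of P. -/
open RealInnerProductSpace

lemma differentiableAt_max_sq (t : ℝ) : DifferentiableAt ℝ (fun s : ℝ => max s 0 ^ 2) t := by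
  rcases lt_trichotomy t 0 with h | h | h
  · have : (fun s : ℝ => max s 0 ^ 2) =ᶠ[nhds t] fun _ => 0 := by
      filter_upwards [Iio_mem_nhds h] with s hs
      rw [max_eq_right (le_of_lt hs)]; norm_num
    exact this.differentiableAt_iff.2 (differentiableAt_const _)
  · subst h
    have : HasDerivAt (fun s : ℝ => max s 0 ^ 2) 0 0 := by
      rw [hasDerivAt_iff_isLittleO]
      have h2 := (hasDerivAt_pow 2 (0:ℝ))
      rw [hasDerivAt_iff_isLittleO] at h2
      refine Asymptotics.IsBigO.trans_isLittleO (Asymptotics.IsBigO.of_bound 1 ?_) h2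
      filter_upwards with s
      rcases le_total s 0 with hs | hs
      · simp [max_eq_right hs]; positivity
      · simp [max_eq_left hs]
    exact this.differentiableAt
  · have : (fun s : ℝ => max s 0 ^ 2) =ᶠ[nhds t] fun s => s ^ 2 := by
      filter_upwards [Ioi_mem_nhds h] with s hs
      rw [max_eq_left (le_of_lt hs)]
    exact this.differentiableAt_iff.2 (by fun_prop)

/-- Inequality-constraint analogue of Theorem 1: the gradient of the inequality
residual `R_G(y) = Σᵢ (max (G(Q y))ᵢ 0)²` at `x` lies in the range of the
symmetric idempotent `P = DQ(x)`. -/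
theorem inequality_residual_gradient_tangential
    {E : Type*} [NormedAddCommGroup E] [InnerProductSpace ℝ E] [FiniteDimensional ℝ E]
    (m : ℕ) (Q : E → E) (G : E → EuclideanSpace ℝ (Fin m)) (x : E)
    (hQ : DifferentiableAt ℝ Q x)
    (hsa : ∀ u v : E, ⟪(fderiv ℝ Q x) u, v⟫ = ⟪u, (fderiv ℝ Q x) v⟫)
    (hidem : (fderiv ℝ Q x).comp (fderiv ℝ Q x) = fderiv ℝ Q x)
    (hG : DifferentiableAt ℝ G (Q x)) :
    DifferentiableAt ℝ (fun y => ∑ i, max (G (Q y) i) 0 ^ 2) x ∧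
    (fderiv ℝ Q x) (gradient (fun y => ∑ i, max (G (Q y) i) 0 ^ 2) x) =
      gradient (fun y => ∑ i, max (G (Q y) i) 0 ^ 2) x := by
  have hF : DifferentiableAt ℝ (fun z => ∑ i, max (G z i) 0 ^ 2) (Q x) := by
    refine DifferentiableAt.fun_sum fun i _ => ?_
    have h1 : DifferentiableAt ℝ (fun z => G z i) (Q x) :=
      (differentiableAt_euclidean.1 hG) i
    exact (differentiableAt_max_sq (G (Q x) i)).comp (Q x) h1
  have hR := hF.hasFDerivAt.comp x hQ.hasFDerivAt
  have hR' : HasFDerivAt (fun y => ∑ i, max (G (Q y) i) 0 ^ 2) _ x := hR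
  refine ⟨hR'.differentiableAt, ?_⟩
  refine ext_inner_right ℝ fun v => ?_
  rw [hsa]
  simp only [gradient, InnerProductSpace.toDual_symm_apply]
  rw [hR'.fderiv]
  have := congrArg (fun L => L v) hidem
  simp only [ContinuousLinearMap.comp_apply] at this ⊢
  rw [this]
end

section
/- Let T ≥ 1 and let β₁, …, β_T ∈ ℝ with 0 < β_t < 1 for each t. Set α_t = 1 − β_t and ᾱ_t = ∏_{s=1}^{t} α_s. Fix x₀ ∈ ℝ and define probability measures on ℝ recursively by μ₀ = δ_{x₀} (Dirac measure) and μ_t = μ_{t−1}.bind (fun x ↦ gaussianReal (√α_t · x) β_t), where gaussianReal m v is the Gaussian measure on ℝ with mean m and variance v. Then for every t ∈ {0, 1, …, T}, μ_t = gaussianReal (√ᾱ_t · x₀) (1 − ᾱ_t). -/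
open MeasureTheory ProbabilityTheory

lemma gaussian_bind_aux (m c : ℝ) (v w : NNReal) :
    (gaussianReal m v).bind (fun x => gaussianReal (c * x) w)
      = gaussianReal (c * m) (NNReal.mk (c ^ 2) (sq_nonneg c) * v + w) := by
  have hconv := gaussianReal_conv_gaussianReal (m₁ := c * m) (m₂ := 0)
    (v₁ := NNReal.mk (c ^ 2) (sq_nonneg c) * v) (v₂ := w)
  rw [add_zero] at hconv
  have hmeas : Measurable (fun x : ℝ => gaussianReal (c * x) w) :=
    measurable_gaussianReal.comp (by fun_prop : Measurable fun x : ℝ => (c * x, w))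
  rw [← hconv, ← gaussianReal_map_const_mul]
  ext s hs
  rw [Measure.bind_apply hs hmeas.aemeasurable, ← lintegral_indicator_one hs,
    Measure.lintegral_conv (measurable_one.indicator hs),
    lintegral_map' ?_ (by fun_prop)]
  · refine lintegral_congr fun x => ?_
    have h := gaussianReal_map_const_add (μ := 0) (v := w) (c * x)
    rw [zero_add] at h
    rw [← h, ← lintegral_indicator_one hs,
      lintegral_map (measurable_one.indicator hs) (by fun_prop)]
  · apply Measurable.aemeasurable
    apply Measurable.lintegral_prod_right'
      (f := fun p : ℝ × ℝ => s.indicator (1 : ℝ → ENNReal) (p.1 + p.2))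
    exact (measurable_one.indicator hs).comp (by fun_prop)

/-- Closed-form marginal of the DDPM forward process (equation (5) of the paper):
starting from `μ₀ = δ_{x₀}` and applying the Gaussian transition kernel
`q(x_t | x_{t-1}) = N(√(1-β_t) x_{t-1}, β_t)`, the marginal at step `t` is
`N(√ᾱ_t x₀, 1 - ᾱ_t)` with `ᾱ_t = ∏_{s=1}^t (1 - β_s)`. -/
theorem ddpm_forward_marginal
    (T : ℕ) (hT : 1 ≤ T) (β : ℕ → ℝ)
    (hβ : ∀ t, 1 ≤ t → t ≤ T → 0 < β t ∧ β t < 1)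
    (x₀ : ℝ) (μ : ℕ → Measure ℝ)
    (hμ0 : μ 0 = Measure.dirac x₀)
    (hμ : ∀ t, 1 ≤ t → t ≤ T →
      μ t = (μ (t - 1)).bind
        (fun x => gaussianReal (Real.sqrt (1 - β t) * x) (Real.toNNReal (β t)))) :
    ∀ t ≤ T, μ t = gaussianReal
      (Real.sqrt (∏ s ∈ Finset.Icc 1 t, (1 - β s)) * x₀)
      (Real.toNNReal (1 - ∏ s ∈ Finset.Icc 1 t, (1 - β s))) := by
  intro t
  induction t with
  | zero => intro _; simp [hμ0, gaussianReal_zero_var]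
  | succ n ih =>
    intro hn
    have hb := hβ (n + 1) (by omega) hn
    have hP : ∀ s ∈ Finset.Icc 1 n, 0 ≤ 1 - β s ∧ 1 - β s ≤ 1 := by
      intro s hs
      rw [Finset.mem_Icc] at hs
      have := hβ s hs.1 (by omega)
      constructor <;> linarith
    have h0 : 0 ≤ ∏ s ∈ Finset.Icc 1 n, (1 - β s) := Finset.prod_nonneg fun s hs => (hP s hs).1
    have h1 : ∏ s ∈ Finset.Icc 1 n, (1 - β s) ≤ 1 :=
      Finset.prod_le_one (fun s hs => (hP s hs).1) fun s hs => (hP s hs).2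
    rw [hμ (n + 1) (by omega) hn, Nat.add_sub_cancel, ih (by omega), gaussian_bind_aux,
      Finset.prod_Icc_succ_top (by omega)]
    generalize ∏ s ∈ Finset.Icc 1 n, (1 - β s) = P at *
    congr 1
    · rw [Real.sqrt_mul h0]; ring
    · apply NNReal.eq
      have h2 : 0 ≤ 1 - P * (1 - β (n + 1)) := by nlinarith
      rw [NNReal.coe_add, NNReal.coe_mul, Real.coe_toNNReal _ (by linarith),
        Real.coe_toNNReal _ hb.1.le, Real.coe_toNNReal _ h2, NNReal.coe_mk,
        Real.sq_sqrt (by linarith)]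
      ring
end
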